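/- Assume the coordinate ordering condition. Define p_n*(i) = λ(i^{(1)})^{s_1}·Π_{ℓ=2}^n λ(i^{(ℓ)})^{s_ℓ−s_{ℓ−1}} for i ∈ I_n (so each p_n* is a probability vector on I_n by the defining equations of the s_n), and set P* = (p_d*; p_{d−1}*; …; p_1*). Then for every P = (p_d; …; p_1) ∈ P_{1,…,d}, Σ_{n=1}^d C_n^{(d)}(P)·H(p_n) ≤ s_d, with equality if and only if P = P*. -/

import Mathlib

open Real Finset Filter

noncomputable section

/-- Index sets of a Gatzouras–Lalley structure. -/
def glIdx (Nf : List ℕ → ℕ) : ℕ → Finset (List ℕ)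
  | 0 => {[]}
  | n + 1 => (glIdx Nf n).biUnion fun u =>
      (Finset.range (Nf u)).image fun j => u ++ [j + 1]

/-- Entropy of a vector `p` on index set `I`. -/
def glEnt (I : Finset (List ℕ)) (p : List ℕ → ℝ) : ℝ :=
  -∑ i ∈ I, p i * Real.log (p i)

/-- Lyapunov exponent `χ_ℓ(p)` for `p` on index set `I`. -/
def glLyap (lam : List ℕ → ℝ) (I : Finset (List ℕ)) (ℓ : ℕ) (p : List ℕ → ℝ) : ℝ :=
  -∑ i ∈ I, p i * Real.log (lam (i.take ℓ))

def IsProbVec (I : Finset (List ℕ)) (p : List ℕ → ℝ) : Prop :=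
  (∀ i ∈ I, 0 ≤ p i) ∧ ∑ i ∈ I, p i = 1

/-- `glCaux d χ k = C^{(d)}_{d-k}`, defined by downward recursion. -/
def glCaux (d : ℕ) (chi : ℕ → ℕ → ℝ) : ℕ → ℝ
  | k => (1 - ∑ j ∈ (Finset.range k).attach,
        glCaux d chi j.1 * chi (d - k) (d - j.1)) / chi (d - k) (d - k)
decreasing_by exact Finset.mem_range.mp j.2

/-- The coefficient `C_n^{(d)}(P)`. -/
def glC (d : ℕ) (lam : List ℕ → ℝ) (Nf : List ℕ → ℕ) (P : ℕ → List ℕ → ℝ) (n : ℕ) : ℝ :=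
  glCaux d (fun a m => glLyap lam (glIdx Nf m) a (P m)) (d - n)

/-- Smallest number of sets of diameter at most `δ` needed to cover `Λ`. -/
def coverNum {E : Type*} [EMetricSpace E] (Λ : Set E) (δ : ℝ) : ℕ :=
  sInf {m : ℕ | ∃ U : Fin m → Set E,
    (∀ k, EMetric.diam (U k) ≤ ENNReal.ofReal δ) ∧ Λ ⊆ ⋃ k, U k}

/-- The affine map `S_i` of a Gatzouras–Lalley system. -/
def glMap (d : ℕ) (lam t : List ℕ → ℝ) (i : List ℕ) (x : EuclideanSpace ℝ (Fin d)) :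
    EuclideanSpace ℝ (Fin d) :=
  WithLp.toLp 2 fun k => lam (i.take ((k : ℕ) + 1)) * x k + t (i.take ((k : ℕ) + 1))

def openCube (d : ℕ) : Set (EuclideanSpace ℝ (Fin d)) := {x | ∀ k, x k ∈ Set.Ioo (0:ℝ) 1}

def closedCube (d : ℕ) : Set (EuclideanSpace ℝ (Fin d)) := {x | ∀ k, x k ∈ Set.Icc (0:ℝ) 1}


/-- The probability vector `p_n^*` on `I_n`:
`p_n^*(i) = λ(i^{(1)})^{s_1}·∏_{ℓ=2}^n λ(i^{(ℓ)})^{s_ℓ-s_{ℓ-1}}` (with `s_0 = 0`). -/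
def glPstar (lam : List ℕ → ℝ) (s : ℕ → ℝ) (n : ℕ) (i : List ℕ) : ℝ :=
  ∏ ℓ ∈ Finset.Icc 1 n, lam (i.take ℓ) ^ (s ℓ - s (ℓ - 1))

/-- The objective `∑_{n=1}^d C_n^{(d)}(P) · H(p_n)` of the variational formula. -/
def glObj (d : ℕ) (lam : List ℕ → ℝ) (Nf : List ℕ → ℕ) (P : ℕ → List ℕ → ℝ) : ℝ :=
  ∑ n ∈ Finset.Icc 1 d, glC d lam Nf P n * glEnt (glIdx Nf n) (P n)

theorem gibbs_aux (p q : ℝ) (hp : 0 ≤ p) (hq : 0 < q) :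
    0 ≤ p * Real.log p - p * Real.log q - p + q ∧
    (p * Real.log p - p * Real.log q - p + q = 0 ↔ p = q) := by
  have h : p * Real.log p - p * Real.log q - p + q = q * InformationTheory.klFun (p / q) := by
    unfold InformationTheory.klFun
    rcases hp.eq_or_lt with h0 | h0
    · simp [← h0]
    · rw [Real.log_div h0.ne' hq.ne']
      field_simp
      ring
  have hpq : 0 ≤ p / q := by positivity
  rw [h]
  refine ⟨mul_nonneg hq.le (InformationTheory.klFun_nonneg hpq), ?_⟩
  rw [mul_eq_zero, InformationTheory.klFun_eq_zero_iff hpq, div_eq_one_iff_eq hq.ne']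
  constructor
  · rintro (h | h)
    · exact absurd h hq.ne'
    · exact h
  · exact Or.inr

theorem gibbs_ineq (I : Finset (List ℕ)) (p q : List ℕ → ℝ) (hp : IsProbVec I p)
    (hq : ∀ i ∈ I, 0 < q i) (hq1 : ∑ i ∈ I, q i = 1) :
    glEnt I p ≤ -∑ i ∈ I, p i * Real.log (q i) ∧
    (glEnt I p = -∑ i ∈ I, p i * Real.log (q i) ↔ ∀ i ∈ I, p i = q i) := by
  have key : ∑ i ∈ I, (p i * Real.log (p i) - p i * Real.log (q i) - p i + q i)
      = (-∑ i ∈ I, p i * Real.log (q i)) - glEnt I p := by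
    rw [Finset.sum_add_distrib, Finset.sum_sub_distrib, Finset.sum_sub_distrib, hp.2, hq1]
    unfold glEnt
    ring
  have hnn : ∀ i ∈ I, 0 ≤ p i * Real.log (p i) - p i * Real.log (q i) - p i + q i :=
    fun i hi => (gibbs_aux _ _ (hp.1 i hi) (hq i hi)).1
  have h0 := Finset.sum_nonneg hnn
  have h1 := Finset.sum_eq_zero_iff_of_nonneg hnn
  rw [key] at h0 h1
  refine ⟨by linarith, ?_⟩
  rw [eq_comm, ← sub_eq_zero, h1]
  exact forall₂_congr fun i hi => (gibbs_aux _ _ (hp.1 i hi) (hq i hi)).2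

theorem glIdx_length (Nf : List ℕ → ℕ) : ∀ n, ∀ i ∈ glIdx Nf n, i.length = n := by
  intro n
  induction n with
  | zero => intro i hi; simp [glIdx] at hi; simp [hi]
  | succ n ih =>
    intro i hi
    simp only [glIdx, Finset.mem_biUnion, Finset.mem_image] at hi
    obtain ⟨u, hu, j, _, rfl⟩ := hi
    simp [ih u hu]

theorem glIdx_take (Nf : List ℕ → ℕ) (l : ℕ) : ∀ n, l ≤ n → ∀ i ∈ glIdx Nf n,
    i.take l ∈ glIdx Nf l := by
  intro n hn
  induction n, hn using Nat.le_induction with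
  | base => intro i hi; rwa [List.take_of_length_le (glIdx_length Nf l i hi).le]
  | succ n hn ih =>
    intro i hi
    simp only [glIdx, Finset.mem_biUnion, Finset.mem_image] at hi
    obtain ⟨u, hu, j, _, rfl⟩ := hi
    rw [List.take_append_of_le_length (by rw [glIdx_length Nf n u hu]; exact hn)]
    exact ih u hu

theorem glIdx_extend (Nf : List ℕ → ℕ) (d n : ℕ)
    (hNf : ∀ n < d, ∀ u ∈ glIdx Nf n, 1 ≤ Nf u) (i : List ℕ) (hi : i ∈ glIdx Nf n) :
    ∀ m, n ≤ m → m ≤ d → ∃ v ∈ glIdx Nf m, v.take n = i := by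
  intro m hm
  induction m, hm using Nat.le_induction with
  | base => intro _; exact ⟨i, hi, List.take_of_length_le (glIdx_length Nf n i hi).le⟩
  | succ m hm ih =>
    intro hmd
    obtain ⟨v, hv, hvi⟩ := ih (by omega)
    refine ⟨v ++ [0 + 1], ?_, ?_⟩
    · simp only [glIdx, Finset.mem_biUnion, Finset.mem_image]
      exact ⟨v, hv, 0, Finset.mem_range.2 (hNf m (by omega) v hv), rfl⟩
    · rw [List.take_append_of_le_length (by rw [glIdx_length Nf m v hv]; exact hm)]
      exact hvi

theorem glCaux_rec (d : ℕ) (X : ℕ → ℕ → ℝ) (n : ℕ) (hn : n ≤ d) (hX : X n n ≠ 0) :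
    ∑ m ∈ Finset.Icc n d, glCaux d X (d - m) * X n m = 1 := by
  have h : glCaux d X (d - n) = (1 - ∑ m ∈ Finset.Ioc n d, glCaux d X (d - m) * X n m) / X n n := by
    rw [glCaux, Finset.sum_attach (Finset.range (d - n))
      (fun j => glCaux d X j * X (d - (d - n)) (d - j))]
    rw [Nat.sub_sub_self hn]
    congr 2
    refine Finset.sum_nbij' (fun j => d - j) (fun m => d - m) ?_ ?_ ?_ ?_ ?_
    · intro j hj; simp only [Finset.mem_range, Finset.mem_Ioc] at *; omega
    · intro j hj; simp only [Finset.mem_range, Finset.mem_Ioc] at *; omega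
    · intro j hj; simp only [Finset.mem_range] at *; omega
    · intro j hj; simp only [Finset.mem_Ioc] at *; omega
    · intro j hj
      simp only [Finset.mem_range] at hj
      rw [Nat.sub_sub_self (by omega : j ≤ d)]
  rw [← Finset.add_sum_Ioc_eq_sum_Icc hn]
  nth_rewrite 1 [h]
  field_simp
  ring

theorem glCaux_pos (d : ℕ) (X : ℕ → ℕ → ℝ)
    (hX : ∀ n m, 1 ≤ n → n ≤ m → m ≤ d → 0 < X n m)
    (hlt : ∀ n m, 1 ≤ n → n + 1 ≤ m → m ≤ d → X n m < X (n + 1) m) :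
    ∀ k n, d - n = k → 1 ≤ n → n ≤ d → 0 < glCaux d X (d - n) := by
  intro k
  induction k using Nat.strong_induction_on with
  | _ k ih =>
    intro n hk h1 hd
    have e1 := glCaux_rec d X n hd (hX n n h1 le_rfl hd).ne'
    rw [← Finset.add_sum_Ioc_eq_sum_Icc hd] at e1
    have hp := hX n n h1 le_rfl hd
    suffices h : ∑ m ∈ Finset.Ioc n d, glCaux d X (d - m) * X n m < 1 by
      by_contra hc
      push Not at hc
      nlinarith [mul_nonpos_of_nonpos_of_nonneg hc hp.le]
    rcases hd.eq_or_lt with h | h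
    · subst h; simp
    · have e2 := glCaux_rec d X (n+1) h (hX _ _ (by omega) le_rfl h).ne'
      rw [← e2]
      have : Finset.Icc (n+1) d = Finset.Ioc n d := by ext; simp [Nat.succ_le_iff]
      rw [this]
      refine Finset.sum_lt_sum_of_nonempty ⟨d, by simp [h]⟩ ?_
      intro m hm
      simp only [Finset.mem_Ioc] at hm
      exact mul_lt_mul_of_pos_left (hlt n m h1 hm.1 hm.2)
        (ih (d - m) (by omega) m rfl (by omega) hm.2)

theorem prob_sum_lt (I : Finset (List ℕ)) (p f g : List ℕ → ℝ) (hp : IsProbVec I p)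
    (h : ∀ i ∈ I, f i < g i) : ∑ i ∈ I, p i * f i < ∑ i ∈ I, p i * g i := by
  refine Finset.sum_lt_sum (fun i hi => mul_le_mul_of_nonneg_left (h i hi).le (hp.1 i hi)) ?_
  by_contra hc
  push Not at hc
  have : ∑ i ∈ I, p i = 0 := Finset.sum_eq_zero fun i hi => by
    by_contra h0
    have := mul_lt_mul_of_pos_left (h i hi) (lt_of_le_of_ne (hp.1 i hi) (Ne.symm h0))
    exact absurd (hc i hi) (not_le.2 this)
  rw [hp.2] at this
  exact one_ne_zero this

/-- Under the coordinate ordering condition, for every tuple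
`P ∈ P_{1,…,d}` one has `∑_{n=1}^d C_n^{(d)}(P)·H(p_n) ≤ s_d`, with equality
if and only if `P = P^* = (p_d^*;…;p_1^*)`. -/
theorem variational_inequality_and_uniqueness
    (d : ℕ) (hd : 1 ≤ d)
    (Nf : List ℕ → ℕ) (hN : 2 ≤ Nf [])
    (hNf : ∀ n < d, ∀ u ∈ glIdx Nf n, 1 ≤ Nf u)
    (lam : List ℕ → ℝ)
    (hlam : ∀ n, 1 ≤ n → n ≤ d → ∀ i ∈ glIdx Nf n, lam i ∈ Set.Ioo (0:ℝ) 1)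
    (horder : ∀ i ∈ glIdx Nf d, ∀ ℓ, 1 ≤ ℓ → ℓ < d →
      lam (i.take (ℓ + 1)) < lam (i.take ℓ))
    (s : ℕ → ℝ) (hs0 : s 0 = 0)
    (hs : ∀ n, 1 ≤ n → n ≤ d →
      ∑ i ∈ glIdx Nf n, ∏ ℓ ∈ Finset.Icc 1 n, lam (i.take ℓ) ^ (s ℓ - s (ℓ - 1)) = 1)
    (P : ℕ → List ℕ → ℝ)
    (hP : ∀ n, 1 ≤ n → n ≤ d → IsProbVec (glIdx Nf n) (P n)) :
    glObj d lam Nf P ≤ s d ∧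
    (glObj d lam Nf P = s d ↔
      ∀ n, 1 ≤ n → n ≤ d → ∀ i ∈ glIdx Nf n, P n i = glPstar lam s n i) := by
  have hl : ∀ n m, 1 ≤ n → n ≤ m → m ≤ d → ∀ i ∈ glIdx Nf m, lam (i.take n) ∈ Set.Ioo (0:ℝ) 1 :=
    fun n m h1 h2 h3 i hi => hlam n h1 (h2.trans h3) _ (glIdx_take Nf n m h2 i hi)
  set X : ℕ → ℕ → ℝ := fun a m => glLyap lam (glIdx Nf m) a (P m) with hXdef
  have hX : ∀ n m, 1 ≤ n → n ≤ m → m ≤ d → 0 < X n m := by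
    intro n m h1 h2 h3
    have := prob_sum_lt (glIdx Nf m) (P m) (fun i => Real.log (lam (i.take n))) (fun _ => 0)
      (hP m (h1.trans h2) h3) (fun i hi => Real.log_neg (hl n m h1 h2 h3 i hi).1 (hl n m h1 h2 h3 i hi).2)
    simp only [mul_zero, Finset.sum_const_zero] at this
    simp only [hXdef, glLyap]
    linarith
  have hlt : ∀ n m, 1 ≤ n → n + 1 ≤ m → m ≤ d → X n m < X (n + 1) m := by
    intro n m h1 h2 h3
    have := prob_sum_lt (glIdx Nf m) (P m) (fun i => Real.log (lam (i.take (n+1))))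
      (fun i => Real.log (lam (i.take n))) (hP m (by omega) h3) (fun i hi => by
        refine Real.log_lt_log (hl (n+1) m (by omega) h2 h3 i hi).1 ?_
        obtain ⟨v, hv, hvi⟩ := glIdx_extend Nf d m hNf i hi d h3 le_rfl
        have := horder v hv n h1 (by omega)
        rw [← hvi, List.take_take, List.take_take, min_eq_left h2, min_eq_left (by omega)]
        exact this)
    simp only [hXdef, glLyap]
    linarith
  have hC : ∀ n ∈ Finset.Icc 1 d, 0 < glC d lam Nf P n := by
    intro n hn
    rw [Finset.mem_Icc] at hn
    exact glCaux_pos d X hX hlt _ n rfl hn.1 hn.2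
  have hrec : ∀ n ∈ Finset.Icc 1 d, ∑ m ∈ Finset.Icc n d, glC d lam Nf P m * X n m = 1 := by
    intro n hn
    rw [Finset.mem_Icc] at hn
    exact glCaux_rec d X n hn.2 (hX n n hn.1 le_rfl hn.2).ne'
  have hG : ∀ n ∈ Finset.Icc 1 d,
      glEnt (glIdx Nf n) (P n) ≤ ∑ l ∈ Finset.Icc 1 n, (s l - s (l - 1)) * X l n ∧
      (glEnt (glIdx Nf n) (P n) = ∑ l ∈ Finset.Icc 1 n, (s l - s (l - 1)) * X l n ↔
        ∀ i ∈ glIdx Nf n, P n i = glPstar lam s n i) := by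
    intro n hn
    rw [Finset.mem_Icc] at hn
    have hpos : ∀ i ∈ glIdx Nf n, ∀ l ∈ Finset.Icc 1 n, 0 < lam (i.take l) ^ (s l - s (l - 1)) := by
      intro i hi l hl'
      rw [Finset.mem_Icc] at hl'
      exact Real.rpow_pos_of_pos (hl l n hl'.1 hl'.2 hn.2 i hi).1 _
    have g := gibbs_ineq (glIdx Nf n) (P n) (glPstar lam s n) (hP n hn.1 hn.2)
      (fun i hi => Finset.prod_pos (hpos i hi)) (hs n hn.1 hn.2)
    have e : -∑ i ∈ glIdx Nf n, P n i * Real.log (glPstar lam s n i) =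
        ∑ l ∈ Finset.Icc 1 n, (s l - s (l - 1)) * X l n := by
      simp only [hXdef, glLyap, mul_neg, Finset.sum_neg_distrib, Finset.mul_sum]
      rw [Finset.sum_comm, neg_inj]
      refine Finset.sum_congr rfl fun i hi => ?_
      rw [glPstar, Real.log_prod (fun l hl' => (hpos i hi l hl').ne'), Finset.mul_sum]
      refine Finset.sum_congr rfl fun l hl' => ?_
      rw [Finset.mem_Icc] at hl'
      rw [Real.log_rpow (hl l n hl'.1 hl'.2 hn.2 i hi).1]
      ring
    rwa [e] at g
  have htel : ∑ n ∈ Finset.Icc 1 d, glC d lam Nf P n *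
      ∑ l ∈ Finset.Icc 1 n, (s l - s (l - 1)) * X l n = s d := by
    have h1 : ∑ n ∈ Finset.Icc 1 d, glC d lam Nf P n *
        ∑ l ∈ Finset.Icc 1 n, (s l - s (l - 1)) * X l n =
        ∑ l ∈ Finset.Icc 1 d, ∑ n ∈ Finset.Icc l d, (s l - s (l - 1)) * (glC d lam Nf P n * X l n) := by
      simp only [Finset.mul_sum]
      rw [Finset.sum_comm' (t' := Finset.Icc 1 d) (s' := fun l => Finset.Icc l d)]
      · refine Finset.sum_congr rfl fun l _ => Finset.sum_congr rfl fun n _ => by ring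
      · intro x y; simp only [Finset.mem_Icc]; omega
    rw [h1]
    have h2 : ∀ k, ∑ l ∈ Finset.Icc 1 k, (s l - s (l - 1)) = s k := by
      intro k
      induction k with
      | zero => simp [hs0]
      | succ k ih => rw [Finset.sum_Icc_succ_top (by omega), ih]; simp
    rw [← h2 d]
    refine Finset.sum_congr rfl fun l hl' => ?_
    rw [← Finset.mul_sum, hrec l hl', mul_one]
  have hle : ∀ n ∈ Finset.Icc 1 d, glC d lam Nf P n * glEnt (glIdx Nf n) (P n) ≤
      glC d lam Nf P n * ∑ l ∈ Finset.Icc 1 n, (s l - s (l - 1)) * X l n :=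
    fun n hn => mul_le_mul_of_nonneg_left (hG n hn).1 (hC n hn).le
  refine ⟨?_, ?_⟩
  · rw [← htel]; exact Finset.sum_le_sum hle
  · rw [← htel, glObj, Finset.sum_eq_sum_iff_of_le hle]
    constructor
    · intro h n h1 h2
      have hn : n ∈ Finset.Icc 1 d := Finset.mem_Icc.2 ⟨h1, h2⟩
      exact (hG n hn).2.1 (mul_left_cancel₀ (hC n hn).ne' (h n hn))
    · intro h n hn
      have hn' := Finset.mem_Icc.1 hn
      rw [(hG n hn).2.2 (h n hn'.1 hn'.2)]
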